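/- Let S be a D×D matrix with i.i.d. standard Gaussian entries, let r ∈ ℝ^D be a fixed nonzero vector, and define q = sign(S r) ∈ {−1, +1}^D (sign applied coordinatewise). Then for any fixed y ∈ ℝ^D, E[ √(π/2)·(‖r‖/D)·⟨q, S y⟩ ] = ⟨r, y⟩. -/

import Mathlib

open MeasureTheory ProbabilityTheory

/-- sign(t) = +1 if t ≥ 0, −1 otherwise. -/
noncomputable def qSign (t : ℝ) : ℝ := if 0 ≤ t then 1 else -1

/-! For jointly Gaussian `X` and `Y`, the residual `Var[X] • Y - cov[X, Y] • X` is uncorrelated with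
`X`, hence independent of it and of every function of `X`. A nonlinear distortion `f(X)` therefore
correlates with `Y` only through the component of `Y` along `X` (Bussgang's theorem). For `f = sign`
and `X`, `Y` centered, this gives `E[sign(X) Y] = √(2/π) cov[X, Y] / √Var[X]`. Each row `s` of the
sketch is a standard Gaussian vector, so with `X = ⟪r, s⟫` and `Y = ⟪y, s⟫` its contribution to
`E⟨q, S y⟩` is `√(2/π) ⟪r, y⟫ / ‖r‖`. -/

open scoped RealInnerProductSpace NNReal

section Sign

lemma measurable_qSign : Measurable qSign :=
  Measurable.ite measurableSet_Ici measurable_const measurable_const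

lemma qSign_mul_self (t : ℝ) : qSign t * t = |t| := by
  unfold qSign
  split_ifs with ht
  · rw [one_mul, abs_of_nonneg ht]
  · rw [neg_one_mul, abs_of_neg (not_le.1 ht)]

lemma norm_qSign (t : ℝ) : ‖qSign t‖ = 1 := by
  unfold qSign
  split_ifs <;> simp

lemma memLp_qSign (p : ENNReal) (μ : Measure ℝ) [IsFiniteMeasure μ] : MemLp qSign p μ :=
  .of_bound measurable_qSign.aestronglyMeasurable 1 (ae_of_all _ fun t ↦ (norm_qSign t).le)

lemma integrable_qSign_mul {Ω : Type*} [MeasurableSpace Ω] {P : Measure Ω} {X Y : Ω → ℝ}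
    (hX : AEMeasurable X P) (hY : Integrable Y P) : Integrable (fun ω ↦ qSign (X ω) * Y ω) P :=
  hY.bdd_mul (measurable_qSign.comp_aemeasurable hX).aestronglyMeasurable
    (ae_of_all _ fun ω ↦ (norm_qSign (X ω)).le)

end Sign

lemma integral_abs_gaussianReal (v : ℝ≥0) :
    ∫ x, |x| ∂gaussianReal 0 v = √(2 / Real.pi) * √v := by
  rcases eq_or_ne v 0 with rfl | hv
  · simp
  have half_line : ∫ x in Set.Ioi (0 : ℝ), x * Real.exp (-(1 / (2 * v)) * x ^ 2) = v := by
    have gamma_integral := integral_rpow_mul_exp_neg_mul_rpow (p := 2) (q := 1)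
      (b := 1 / (2 * v)) two_pos (by norm_num) (by positivity)
    simp only [Real.rpow_one, Real.rpow_two] at gamma_integral
    rw [gamma_integral, neg_div, add_self_div_two, Real.rpow_neg_one, Real.Gamma_one]
    field_simp
  calc ∫ x, |x| ∂gaussianReal 0 v
      = ∫ x, (√(2 * Real.pi * v))⁻¹ * (|x| * Real.exp (-(1 / (2 * v)) * |x| ^ 2)) := by
        rw [integral_gaussianReal_eq_integral_smul hv]
        refine integral_congr_ae (ae_of_all _ fun x ↦ ?_)
        simp only [gaussianPDFReal, smul_eq_mul, sq_abs, sub_zero]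
        ring_nf
    _ = (√(2 * Real.pi * v))⁻¹ * (2 * v) := by
        rw [integral_const_mul,
          integral_comp_abs (f := fun t ↦ t * Real.exp (-(1 / (2 * v)) * t ^ 2)), half_line]
    _ = √(2 / Real.pi) * √v := by
        rw [inv_mul_eq_iff_eq_mul₀ (by positivity), ← Real.sqrt_mul (by positivity),
          ← Real.sqrt_mul (by positivity), eq_comm, Real.sqrt_eq_iff_mul_self_eq (by positivity)
          (by positivity)]
        field_simp

section JointlyGaussian

variable {Ω : Type*} {mΩ : MeasurableSpace Ω} {P : Measure Ω} {X Y : Ω → ℝ}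

lemma integral_abs_of_hasGaussianLaw (hX : HasGaussianLaw X P) (hX_mean : P[X] = 0) :
    ∫ ω, |X ω| ∂P = √(2 / Real.pi) * √Var[X; P] := by
  have hX_law := hX.map_eq_gaussianReal
  rw [hX_mean] at hX_law
  rw [← integral_map (f := fun x : ℝ ↦ |x|) hX.aemeasurable (by fun_prop), hX_law,
    integral_abs_gaussianReal, Real.coe_toNNReal _ (variance_nonneg X P)]

/-- **Bussgang's theorem**, multiplied out so that it also covers `Var[X; P] = 0`. -/
lemma variance_mul_covariance_comp_left {f : ℝ → ℝ} (hXY : HasGaussianLaw (fun ω ↦ (X ω, Y ω)) P)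
    (hf : MemLp f 2 (P.map X)) :
    Var[X; P] * cov[f ∘ X, Y; P] = cov[X, Y; P] * cov[f ∘ X, X; P] := by
  have := hXY.isProbabilityMeasure
  have hX := hXY.fst.memLp_two
  have hY := hXY.snd.memLp_two
  have hfX : MemLp (f ∘ X) 2 P := hf.comp_of_map hXY.fst.aemeasurable
  have hvY := hY.const_smul Var[X; P]
  have hcX := hX.const_smul cov[X, Y; P]
  set Z := Var[X; P] • Y - cov[X, Y; P] • X
  have hXZ : HasGaussianLaw (fun ω ↦ (X ω, Z ω)) P :=
    hXY.map_fun ((ContinuousLinearMap.fst ℝ ℝ ℝ).prod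
      (Var[X; P] • ContinuousLinearMap.snd ℝ ℝ ℝ - cov[X, Y; P] • ContinuousLinearMap.fst ℝ ℝ ℝ))
  have uncorrelated : cov[X, Z; P] = 0 := by
    rw [covariance_sub_right hX hvY hcX, covariance_smul_right, covariance_smul_right,
      covariance_self hXY.fst.aemeasurable]
    ring
  have independent : IndepFun (f ∘ X) Z P :=
    (hXZ.indepFun_of_covariance_eq_zero uncorrelated).comp₀ hXZ.fst.aemeasurable
      hXZ.snd.aemeasurable hf.aestronglyMeasurable.aemeasurable aemeasurable_id
  have comp_uncorrelated := independent.covariance_eq_zero hfX (hvY.sub hcX)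
  rwa [covariance_sub_right hfX hvY hcX, covariance_smul_right, covariance_smul_right,
    sub_eq_zero] at comp_uncorrelated

lemma integral_qSign_mul_of_hasGaussianLaw (hXY : HasGaussianLaw (fun ω ↦ (X ω, Y ω)) P)
    (hX_mean : P[X] = 0) (hY_mean : P[Y] = 0) (hX_var : Var[X; P] ≠ 0) :
    ∫ ω, qSign (X ω) * Y ω ∂P = √(2 / Real.pi) * (cov[X, Y; P] / √Var[X; P]) := by
  have := hXY.isProbabilityMeasure
  have hsign : MemLp qSign 2 (P.map X) := memLp_qSign 2 _
  have hsignX : MemLp (qSign ∘ X) 2 P := hsign.comp_of_map hXY.fst.aemeasurable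
  have cov_sign_left : cov[qSign ∘ X, Y; P] = ∫ ω, qSign (X ω) * Y ω ∂P := by
    simp [covariance_eq_sub hsignX hXY.snd.memLp_two, hY_mean]
  have cov_sign_self : cov[qSign ∘ X, X; P] = √(2 / Real.pi) * √Var[X; P] := by
    simp [covariance_eq_sub hsignX hXY.fst.memLp_two, hX_mean, qSign_mul_self,
      integral_abs_of_hasGaussianLaw hXY.fst hX_mean]
  have bussgang := variance_mul_covariance_comp_left hXY hsign
  rw [cov_sign_left, cov_sign_self] at bussgang
  have sd_ne_zero : √Var[X; P] ≠ 0 := (Real.sqrt_ne_zero (variance_nonneg X P)).2 hX_var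
  refine mul_left_cancel₀ hX_var (bussgang.trans ?_)
  nth_rw 2 [← Real.sq_sqrt (variance_nonneg X P)]
  field_simp

end JointlyGaussian

section StdGaussian

variable {E : Type*} [NormedAddCommGroup E] [InnerProductSpace ℝ E] [FiniteDimensional ℝ E]
  [MeasurableSpace E] [BorelSpace E]

lemma covariance_inner_stdGaussian (a b : E) :
    cov[fun x ↦ ⟪a, x⟫, fun x ↦ ⟪b, x⟫; stdGaussian E] = ⟪a, b⟫ := by
  rw [← covarianceBilin_apply_eq_cov IsGaussian.memLp_two_id, covarianceBilin_stdGaussian]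
  rfl

lemma variance_inner_stdGaussian (a : E) : Var[fun x ↦ ⟪a, x⟫; stdGaussian E] = ‖a‖ ^ 2 := by
  rw [← covariance_self (by fun_prop), covariance_inner_stdGaussian, real_inner_self_eq_norm_sq]

lemma integral_qSign_inner_mul_inner_stdGaussian {a : E} (ha : a ≠ 0) (b : E) :
    ∫ x, qSign ⟪a, x⟫ * ⟪b, x⟫ ∂stdGaussian E = √(2 / Real.pi) * (⟪a, b⟫ / ‖a‖) := by
  have joint_law : HasGaussianLaw (fun x : E ↦ (⟪a, x⟫, ⟪b, x⟫)) (stdGaussian E) :=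
    IsGaussian.hasGaussianLaw_id.map_fun ((innerSL ℝ a).prod (innerSL ℝ b))
  have mean_inner (c : E) : ∫ x, ⟪c, x⟫ ∂stdGaussian E = 0 :=
    integral_strongDual_stdGaussian (innerSL ℝ c)
  rw [integral_qSign_mul_of_hasGaussianLaw joint_law (mean_inner a) (mean_inner b)
      (by rw [variance_inner_stdGaussian]; positivity),
    covariance_inner_stdGaussian, variance_inner_stdGaussian, Real.sqrt_sq (norm_nonneg a)]

lemma integrable_qSign_inner_mul_inner_stdGaussian (a b : E) :
    Integrable (fun x ↦ qSign ⟪a, x⟫ * ⟪b, x⟫) (stdGaussian E) :=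
  integrable_qSign_mul (by fun_prop) (IsGaussian.integrable_id.const_inner b)

end StdGaussian

section Pi

variable {ι : Type*} [Fintype ι]

lemma integral_sum_comp_eval {Ω F : Type*} [MeasurableSpace Ω] [NormedAddCommGroup F]
    [NormedSpace ℝ F] {μ : Measure Ω} [IsProbabilityMeasure μ] {g : Ω → F} (hg : Integrable g μ) :
    ∫ S : ι → Ω, ∑ i, g (S i) ∂(Measure.pi fun _ ↦ μ) = Fintype.card ι • ∫ s, g s ∂μ := by
  rw [integral_finsetSum _ fun i _ ↦ integrable_comp_eval (μ := fun _ : ι ↦ μ) (i := i) hg]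
  simp [integral_comp_eval (μ := fun _ : ι ↦ μ) hg.aestronglyMeasurable]

lemma measurePreserving_toLp_pi_gaussianReal :
    MeasurePreserving (WithLp.toLp 2) (Measure.pi fun _ : ι ↦ gaussianReal 0 1)
      (stdGaussian (EuclideanSpace ℝ ι)) :=
  ⟨by fun_prop, map_pi_eq_stdGaussian⟩

lemma integrable_qSign_sum_mul_sum_pi_gaussianReal (a b : ι → ℝ) :
    Integrable (fun s ↦ qSign (∑ j, s j * a j) * ∑ j, s j * b j)
      (Measure.pi fun _ : ι ↦ gaussianReal 0 1) := by
  simpa [Function.comp_def, PiLp.inner_apply] using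
    measurePreserving_toLp_pi_gaussianReal.integrable_comp_of_integrable
      (integrable_qSign_inner_mul_inner_stdGaussian (WithLp.toLp 2 a) (WithLp.toLp 2 b))

lemma integral_qSign_sum_mul_sum_pi_gaussianReal {a : ι → ℝ} (ha : a ≠ 0) (b : ι → ℝ) :
    ∫ s, qSign (∑ j, s j * a j) * ∑ j, s j * b j ∂(Measure.pi fun _ : ι ↦ gaussianReal 0 1) =
      √(2 / Real.pi) * ((∑ j, a j * b j) / √(∑ j, a j ^ 2)) := by
  have stdGaussian_integral :=
    (measurePreserving_toLp_pi_gaussianReal.integral_comp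
      (MeasurableEquiv.toLp 2 _).measurableEmbedding _).trans
      (integral_qSign_inner_mul_inner_stdGaussian (a := WithLp.toLp 2 a) (by simpa using ha)
        (WithLp.toLp 2 b))
  simpa [PiLp.inner_apply, EuclideanSpace.norm_eq, mul_comm] using stdGaussian_integral

end Pi

/-- Unbiasedness of the QJL residual estimator: with S a D×D i.i.d. standard
Gaussian matrix and q = sign(S r), E[√(π/2)·(‖r‖/D)·⟨q, S y⟩] = ⟨r, y⟩. -/
theorem stmt_8 (D : ℕ) (r y : Fin D → ℝ) (hr : r ≠ 0) :
    (∫ S : Fin D → Fin D → ℝ,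
        Real.sqrt (Real.pi / 2) * (Real.sqrt (∑ j, r j ^ 2) / D) *
          ∑ i, qSign (∑ j, S i j * r j) * (∑ j, S i j * y j)
        ∂(Measure.pi fun _ : Fin D => Measure.pi fun _ : Fin D => gaussianReal 0 1)) =
      ∑ j, r j * y j := by
  obtain ⟨k, hk⟩ := Function.ne_iff.1 hr
  have hD : (D : ℝ) ≠ 0 := Nat.cast_ne_zero.2 k.pos.ne'
  have norm_ne_zero : √(∑ j, r j ^ 2) ≠ 0 :=
    (Real.sqrt_pos.2 (Finset.sum_pos' (fun _ _ ↦ sq_nonneg _)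
      ⟨k, Finset.mem_univ k, sq_pos_of_ne_zero hk⟩)).ne'
  have scale_cancel : √(Real.pi / 2) * √(2 / Real.pi) = 1 := by
    rw [← inv_div, Real.sqrt_inv, inv_mul_cancel₀ (by positivity)]
  rw [integral_const_mul,
    integral_sum_comp_eval (integrable_qSign_sum_mul_sum_pi_gaussianReal r y),
    integral_qSign_sum_mul_sum_pi_gaussianReal hr y, Fintype.card_fin, nsmul_eq_mul]
  calc √(Real.pi / 2) * (√(∑ j, r j ^ 2) / D) *
        (D * (√(2 / Real.pi) * ((∑ j, r j * y j) / √(∑ j, r j ^ 2))))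
      = √(Real.pi / 2) * √(2 / Real.pi) * ∑ j, r j * y j := by field_simp
    _ = ∑ j, r j * y j := by rw [scale_cancel, one_mul]
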